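/- arXiv:2005.02540 — 7 statements merged into one kernel-verified Lean document; each statement's English description precedes it below -/
import Mathlib

section
/- (ℝ^d \ cl(𝒳)) \ VB(𝒳) is contained in the union over all ε > 0 of R(ε); that is, by varying ε > 0, the points x' with x' ∈ 𝒳_εᶜ ∩ VB(𝒳)ᶜ and ‖x'−x‖ = ε for some x ∈ cl(𝒳) fill up all of ℝ^d minus cl(𝒳) except for the Voronoi boundary VB(𝒳). (Lemma 3 of the paper.) -/
open Set

variable {E : Type*} [NormedAddCommGroup E] [NormedSpace ℝ E] [FiniteDimensional ℝ E]

/-- The Voronoi boundary of the clean input set `X`. -/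
def VB (X : Set E) : Set E :=
  {x' | ∃ x₁ ∈ closure X, ∃ x₂ ∈ closure X, x₁ ≠ x₂ ∧ ‖x' - x₁‖ = ‖x' - x₂‖}

/-- `A_ε`: points within distance `< ε` of the closure of `X`. -/
def Aeps (X : Set E) (ε : ℝ) : Set E := {x'' | ∃ x ∈ closure X, ‖x'' - x‖ < ε}

/-- `𝒳_ε`: the previously allowed perturbation region. -/
def Xeps (X : Set E) (ε : ℝ) : Set E := Aeps X ε ∩ (VB X)ᶜ

/-- `R(ε)`: the genuine perturbation region. -/
def Rgen (X : Set E) (ε : ℝ) : Set E :=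
  if ε = 0 then X
  else {x' | ∃ x ∈ closure X, ‖x' - x‖ = ε} ∩ (Xeps X ε)ᶜ ∩ (VB X)ᶜ

/-- Lemma 3: by varying `ε > 0`, the genuine perturbation regions `R(ε)` fill up all of
`ℝ^d` minus `cl(𝒳)` except for the Voronoi boundary `VB(𝒳)`. -/
theorem stmt_3 (X : Set E) (hX : X.Nonempty) :
    (univ \ closure X) \ VB X ⊆ ⋃ ε > (0 : ℝ), Rgen X ε := by
  rintro x ⟨⟨-, hx⟩, hV⟩
  have : ProperSpace E := FiniteDimensional.proper ℝ E
  -- In a finite-dimensional space, the distance to a nonempty closed set is attained.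
  obtain ⟨y, hy, hd⟩ := isClosed_closure.exists_infDist_eq_dist hX.closure x
  have hne : x ≠ y := fun h => hx (h ▸ hy)
  have hpos : 0 < ‖x - y‖ := norm_pos_iff.2 (sub_ne_zero.2 hne)
  -- The radius is the distance from `x` to `closure X`, so no point of `closure X` is closer.
  refine mem_iUnion₂.2 ⟨‖x - y‖, hpos, ?_⟩
  rw [Rgen, if_neg hpos.ne']
  refine ⟨⟨⟨y, hy, rfl⟩, ?_⟩, hV⟩
  rintro ⟨⟨z, hz, hlt⟩, -⟩
  have hle := Metric.infDist_le_dist_of_mem (x := x) hz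
  rw [hd, dist_eq_norm, dist_eq_norm] at hle
  exact hlt.not_ge hle
end

section
/- ℝ^d \ (cl(𝒳) \ 𝒳) \ VB(𝒳) is contained in the union over all ε ≥ 0 of R(ε); that is, genuine adversarial accuracy uses every point of ℝ^d except possibly points of cl(𝒳) \ 𝒳 and of the Voronoi boundary VB(𝒳). (Consequence of Lemma 3 combined with R(0) = 𝒳, stated after Lemma 3 in the paper.) -/
/-!
A point `p` outside `closure X` lies in `R(ε)` for `ε` the distance from `p` to `closure X`: this
distance is attained and positive, and no point of the closure is strictly closer, so `p ∉ A_ε`.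
A point of `X` lies in `R(0) = X`, and the points of `closure X \ X` are excluded by hypothesis.
-/

open Set

variable {E : Type*} [NormedAddCommGroup E] [NormedSpace ℝ E] [FiniteDimensional ℝ E]

/-- Consequence of Lemma 3 and `R(0) = 𝒳`: genuine adversarial accuracy uses every point
of `ℝ^d` except possibly points of `cl(𝒳) \ 𝒳` and of the Voronoi boundary `VB(𝒳)`. -/
theorem stmt_4 (X : Set E) (hX : X.Nonempty) :
    (univ \ (closure X \ X)) \ VB X ⊆ ⋃ ε ≥ (0 : ℝ), Rgen X ε := by
  rintro p ⟨⟨-, hp⟩, hV⟩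
  by_cases hpX : p ∈ X
  · exact mem_iUnion₂.2 ⟨0, le_rfl, by simpa [Rgen] using hpX⟩
  have hpc : p ∉ closure X := fun h => hp ⟨h, hpX⟩
  -- Finite dimension makes `E` proper, so the distance to the closed set `closure X` is attained.
  obtain ⟨x, hx, hd⟩ := isClosed_closure.exists_infDist_eq_dist hX.closure p
  have hne : ‖p - x‖ ≠ 0 := by
    rw [norm_ne_zero_iff, sub_ne_zero]
    rintro rfl
    exact hpc hx
  refine mem_iUnion₂.2 ⟨‖p - x‖, norm_nonneg _, ?_⟩
  rw [Rgen, if_neg hne]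
  refine ⟨⟨⟨x, hx, rfl⟩, ?_⟩, hV⟩
  rintro ⟨⟨y, hy, hlt⟩, -⟩
  have hle := Metric.infDist_le_dist_of_mem (x := p) hy
  rw [hd, dist_eq_norm, dist_eq_norm] at hle
  exact hle.not_gt hlt
end

section
/- For all ε₁, ε₂ ≥ 0 with ε₁ ≠ ε₂, the genuine perturbation regions are disjoint: R(ε₁) ∩ R(ε₂) = ∅. (Part 1 of Theorem 1: genuine adversarial accuracy does not allow overlaps across different perturbation norms.) -/
/-!
A point of `R(ε)` has distance exactly `ε` to the closure of the clean set, and this distance is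
attained: some point of the closure is at distance `ε` (`exists_norm_eq_of_mem_Rgen`) and none is
closer (`le_norm_of_mem_Rgen`). So the point determines `ε`.
-/

open Set

variable {E : Type*} [NormedAddCommGroup E] [NormedSpace ℝ E] [FiniteDimensional ℝ E]

/-- Every point of `R(ε)`, also for `ε = 0`, lies at distance exactly `ε` from some point of the
closure of the clean set. -/
theorem exists_norm_eq_of_mem_Rgen {X : Set E} {ε : ℝ} {p : E} (hp : p ∈ Rgen X ε) :
    ∃ x ∈ closure X, ‖p - x‖ = ε := by
  unfold Rgen at hp
  split_ifs at hp with h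
  · exact ⟨p, subset_closure hp, by simp [h]⟩
  · exact hp.1.1

/-- No point of the closure is at distance less than `ε` from a point of `R(ε)`: otherwise that
point, being off the Voronoi boundary, would lie in `𝒳_ε`. -/
theorem le_norm_of_mem_Rgen {X : Set E} {ε : ℝ} {p x : E} (hp : p ∈ Rgen X ε)
    (hx : x ∈ closure X) : ε ≤ ‖p - x‖ := by
  unfold Rgen at hp
  split_ifs at hp with h
  · exact h ▸ norm_nonneg _
  · by_contra! hlt
    exact hp.1.2 ⟨⟨x, hx, hlt⟩, hp.2⟩

/-- Part 1 of Theorem 1: genuine perturbation regions for different perturbation norms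
are disjoint. -/
theorem stmt_5 (X : Set E) (hX : X.Nonempty) (ε₁ ε₂ : ℝ) (hε₁ : 0 ≤ ε₁) (hε₂ : 0 ≤ ε₂)
    (hne : ε₁ ≠ ε₂) : Rgen X ε₁ ∩ Rgen X ε₂ = ∅ := by
  refine eq_empty_of_forall_notMem fun p hp => hne ?_
  obtain ⟨x₁, hx₁, h₁⟩ := exists_norm_eq_of_mem_Rgen hp.1
  obtain ⟨x₂, hx₂, h₂⟩ := exists_norm_eq_of_mem_Rgen hp.2
  exact le_antisymm (h₂ ▸ le_norm_of_mem_Rgen hp.1 hx₂) (h₁ ▸ le_norm_of_mem_Rgen hp.2 hx₁)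
end

section
/- Let ε > 0, let x ∈ cl(𝒳), and let x' ∈ 𝒳_εᶜ ∩ VB(𝒳)ᶜ satisfy ‖x'−x‖ = ε. Then x is the unique minimizer over cl(𝒳) of the function z ↦ ‖x'−z‖; that is, ‖x'−z‖ > ε for every z ∈ cl(𝒳) with z ≠ x, and ‖x'−x‖ = ε. Consequently a single nearest neighbor classifier for the data (cl(𝒳), c) assigns the class c(x) to x'. (The key step in Part 1 of the proof of Theorem 2: the 1-NN classifier attains genuine adversarial accuracy 1 for every ε.) -/
open Set

variable {E : Type*} [NormedAddCommGroup E] [NormedSpace ℝ E] [FiniteDimensional ℝ E]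

/-- Key step in Part 1 of the proof of Theorem 2: if `x ∈ cl(𝒳)`,
`x' ∈ 𝒳_εᶜ ∩ VB(𝒳)ᶜ` and `‖x' - x‖ = ε`, then `x` is the unique minimizer over `cl(𝒳)` of
`z ↦ ‖x' - z‖` (every other point of `cl(𝒳)` is at distance `> ε`), so any single nearest
neighbor classifier `f` for the data `(cl(𝒳), c)` assigns the class `c x` to `x'`. -/
theorem stmt_7 {Y : Type*} (X : Set E) (hX : X.Nonempty) (c : E → Y) (f : E → Y)
    (hf : ∀ p : E, ∃ z ∈ closure X, (∀ w ∈ closure X, ‖p - z‖ ≤ ‖p - w‖) ∧ f p = c z)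
    (ε : ℝ) (hε : 0 < ε) (x : E) (hx : x ∈ closure X)
    (x' : E) (hx' : x' ∈ (Xeps X ε)ᶜ ∩ (VB X)ᶜ) (hnorm : ‖x' - x‖ = ε) :
    (∀ z ∈ closure X, z ≠ x → ε < ‖x' - z‖) ∧ f x' = c x := by
  obtain ⟨hXe, hVB⟩ := hx'
  have hlt : ∀ z ∈ closure X, z ≠ x → ε < ‖x' - z‖ := by
    intro z hz hzx
    -- Off the Voronoi boundary, lying outside `𝒳_ε` means that no point of `cl(𝒳)` is closer
    -- than `ε`.
    have hle : ε ≤ ‖x' - z‖ := not_lt.mp fun h => hXe ⟨⟨z, hz, h⟩, hVB⟩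
    -- Equality would make `x'` equidistant from `z` and `x`.
    exact lt_of_le_of_ne hle fun h => hVB ⟨z, hz, x, hx, hzx, by rw [hnorm, h]⟩
  refine ⟨hlt, ?_⟩
  obtain ⟨z, hz, hmin, hfz⟩ := hf x'
  have hzx : z = x := by
    by_contra hne
    exact absurd (hnorm ▸ hmin x hx) (not_le.mpr (hlt z hz hne))
  rw [hfz, hzx]
end

section
/- Let c : cl(𝒳) → 𝒴 assign a class to each point of cl(𝒳), and let f : ℝ^d → 𝒴 be a classifier such that (i) f(x) = c(x) for every x ∈ 𝒳, and (ii) for every ε > 0, every x ∈ cl(𝒳), and every x' ∈ 𝒳_εᶜ ∩ VB(𝒳)ᶜ with ‖x'−x‖ = ε, one has f(x') = c(x). Then for every point x' ∈ ℝ^d with x' ∉ cl(𝒳) \ 𝒳 and x' ∉ VB(𝒳), the distance from x' to cl(𝒳) is attained at a unique point z ∈ cl(𝒳) and f(x') = c(z); i.e., f coincides with the single nearest neighbor classifier everywhere except possibly on cl(𝒳) \ 𝒳 and on the Voronoi boundary VB(𝒳). (The uniqueness part of Theorem 2.) -/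
/-!
Since `closure X` is a nonempty closed set in a finite-dimensional space, the distance from `x'` to
it is attained at some `z`. Any second minimizer would be equidistant with `z` from `x'`, putting
`x'` in `VB X`; hence `z` is unique. If `‖x' - z‖ = 0` then `x' = z` lies in `closure X`, hence in
`X`, and `f` is correct on `X`. Otherwise `ε = ‖x' - z‖` is positive, and no point of `closure X`
is closer than `ε` to `x'`, so `x'` lies outside `Xeps X ε` and the hypothesis on perturbed points
applies.
-/

open Set

variable {E : Type*} [NormedAddCommGroup E] [NormedSpace ℝ E] [FiniteDimensional ℝ E]

/-- Uniqueness part of Theorem 2: a classifier `f` that is correct on `𝒳` and on all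
genuinely perturbed points coincides with the single nearest neighbor classifier everywhere
except possibly on `cl(𝒳) \ 𝒳` and on the Voronoi boundary `VB(𝒳)`. -/
theorem stmt_8 {Y : Type*} (X : Set E) (hX : X.Nonempty) (c : E → Y) (f : E → Y)
    (h1 : ∀ x ∈ X, f x = c x)
    (h2 : ∀ ε > (0 : ℝ), ∀ x ∈ closure X, ∀ x' ∈ (Xeps X ε)ᶜ ∩ (VB X)ᶜ,
      ‖x' - x‖ = ε → f x' = c x)
    (x' : E) (hx'1 : x' ∉ closure X \ X) (hx'2 : x' ∉ VB X) :
    ∃ z ∈ closure X, (∀ w ∈ closure X, ‖x' - z‖ ≤ ‖x' - w‖) ∧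
      (∀ w ∈ closure X, (∀ v ∈ closure X, ‖x' - w‖ ≤ ‖x' - v‖) → w = z) ∧
      f x' = c z := by
  have : ProperSpace E := FiniteDimensional.proper ℝ E
  obtain ⟨z, hz, hdist⟩ := isClosed_closure.exists_infDist_eq_dist hX.closure x'
  have hmin : ∀ w ∈ closure X, ‖x' - z‖ ≤ ‖x' - w‖ := fun w hw => by
    rw [← dist_eq_norm, ← dist_eq_norm, ← hdist]
    exact Metric.infDist_le_dist_of_mem hw
  refine ⟨z, hz, hmin, fun w hw hwmin => ?_, ?_⟩
  · by_contra hne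
    exact hx'2 ⟨w, hw, z, hz, hne, le_antisymm (hwmin z hz) (hmin w hw)⟩
  · rcases eq_or_ne x' z with rfl | hne
    · exact h1 _ (by_contra fun hn => hx'1 ⟨hz, hn⟩)
    · refine h2 ‖x' - z‖ (norm_pos_iff.mpr (sub_ne_zero.mpr hne)) z hz x' ⟨?_, hx'2⟩ rfl
      rintro ⟨⟨w, hw, hlt⟩, -⟩
      exact (hmin w hw).not_gt hlt
end

section
/- Let A = {p ∈ ℝ² : ‖p − (0,1)‖₂ = 1} and B = {(t,0) : t ∈ ℝ, t ≠ 0}, with class labels a and b respectively (a ≠ b). For every classifier f : ℝ² → {a, b} that is correct on all clean data (f(p) = a for all p ∈ A and f(q) = b for all q ∈ B) and every ε > 0, there exist a clean point x ∈ A ∪ B and a perturbed point x' ∈ ℝ² with ‖x'−x‖₂ ≤ ε and f(x') different from the class of x; that is, every classifier with accuracy 1 on the sunset dataset has adversarial examples for every positive maximum perturbation norm. -/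
open Set

/-- The point `(a, b)` of the Euclidean plane `ℝ²`. -/
noncomputable def pt (a b : ℝ) : EuclideanSpace ℝ (Fin 2) :=
  (EuclideanSpace.equiv (Fin 2) ℝ).symm ![a, b]

/-- Class A of the two-dimensional sunset dataset: the circle of radius 1 centered at (0,1). -/
noncomputable def sunsetA : Set (EuclideanSpace ℝ (Fin 2)) := {p | ‖p - pt 0 1‖ = 1}

/-- Class B of the two-dimensional sunset dataset: the horizontal axis with the tangency
point (the origin) removed. -/
noncomputable def sunsetB : Set (EuclideanSpace ℝ (Fin 2)) := {p | ∃ t : ℝ, t ≠ 0 ∧ p = pt t 0}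

/-- Every classifier that is correct on all clean data of the sunset dataset has adversarial
examples for every positive maximum perturbation norm `ε`. -/
theorem stmt_13 {Y : Type*} (a b : Y) (hab : a ≠ b)
    (f : EuclideanSpace ℝ (Fin 2) → Y)
    (hA : ∀ p ∈ sunsetA, f p = a) (hB : ∀ q ∈ sunsetB, f q = b)
    (ε : ℝ) (hε : 0 < ε) :
    ∃ x x' : EuclideanSpace ℝ (Fin 2), ‖x' - x‖ ≤ ε ∧
      ((x ∈ sunsetA ∧ f x' ≠ a) ∨ (x ∈ sunsetB ∧ f x' ≠ b)) := by
  -- The tangency point `(0, 0)` has class A, and `(ε, 0)`, at distance exactly `ε`, has class B.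
  refine ⟨pt 0 0, pt ε 0, ?_, Or.inl ⟨?_, ?_⟩⟩
  · simp [pt, EuclideanSpace.norm_eq, Fin.sum_univ_two, Real.sqrt_sq hε.le]
  · simp [sunsetA, pt, EuclideanSpace.norm_eq, Fin.sum_univ_two]
  · rw [hB _ ⟨ε, hε.ne', rfl⟩]
    exact hab.symm
end

section
/- For the one-dimensional toy dataset, the classifiers f₂(x) = 1 − step(x+4) + step(x) and f₃(x) = step(x) (where step(x) = 1 for x ≥ 0 and step(x) = −1 for x < 0) have identical sets of ε-robust points for every ε ≥ 0: {x ∈ 𝒳 : f₂(x') = c(x) for all x' with |x'−x| ≤ ε} = {x ∈ 𝒳 : f₃(x') = c(x) for all x' with |x'−x| ≤ ε}. Hence f₂ and f₃ have the same standard adversarial accuracy by maximum perturbation norm for every ε, even though f₂ differs from the oracle classifier f₃ (f₂ is overly invariant on x < −4). (The claim illustrated by the left-hand graphs of Figure 4.) -/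
/-!
On `[-4, ∞)` the two classifiers coincide (`f₂_eq_f₃`), so they can only be told apart by perturbations reaching
below `-4`. From a toy input such a perturbation passes the decision boundary at `0`:
some point of `[-4, ∞)` misclassified by both classifiers is at least as close to the input
(`exists_near_misclassified`). Hence an `ε`-robust point for either classifier has its whole
`ε`-ball inside `[-4, ∞)`, where the classifiers agree.
-/

open Set

/-- The step function: 1 for `x ≥ 0`, −1 for `x < 0`. -/
noncomputable def stepf (x : ℝ) : ℝ := if 0 ≤ x then 1 else -1

/-- The classifier `f₂(x) = 1 − step(x + 4) + step(x)`. -/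
noncomputable def f₂ (x : ℝ) : ℝ := 1 - stepf (x + 4) + stepf x

/-- The classifier `f₃(x) = step(x)`. -/
noncomputable def f₃ (x : ℝ) : ℝ := stepf x

/-- The clean input set of the one-dimensional toy dataset: `[−2,−1) ∪ [1,2)`. -/
def Xtoy : Set ℝ := Ico (-2) (-1) ∪ Ico 1 2

/-- The class assignment of the toy dataset: −1 on `[−2,−1]`, 1 on `[1,2]`. -/
noncomputable def ctoy (x : ℝ) : ℝ := if x < 0 then -1 else 1

theorem f₂_eq_f₃ {y : ℝ} (hy : -4 ≤ y) : f₂ y = f₃ y := by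
  have h : 0 ≤ y + 4 := by linarith
  simp [f₂, f₃, stepf, h]

/-- Every toy input has a misclassified point in `[-4, ∞)` that is at least as close to it as any
point below `-4`. -/
theorem exists_near_misclassified {x : ℝ} (hx : x ∈ Xtoy) :
    ∃ w : ℝ, -4 ≤ w ∧ f₃ w ≠ ctoy x ∧ ∀ y < -4, |w - x| ≤ |y - x| := by
  rcases hx with ⟨h1, h2⟩ | ⟨h1, h2⟩
  -- A negative input is within distance `2` of the boundary point `0`, which has label `1`,
  -- and at distance more than `2` from every point below `-4`.
  · refine ⟨0, by norm_num, ?_, fun y hy => ?_⟩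
    · have h : x < 0 := by linarith
      norm_num [f₃, stepf, ctoy, h]
    · rw [abs_of_pos (by linarith), abs_of_neg (by linarith)]
      linarith
  -- For a positive input, `-1` lies between it and every point below `-4`.
  · refine ⟨-1, by norm_num, ?_, fun y hy => ?_⟩
    · have h : ¬ x < 0 := by linarith
      norm_num [f₃, stepf, ctoy, h]
    · rw [abs_of_neg (by linarith), abs_of_neg (by linarith)]
      linarith

/-- For every `ε ≥ 0`, the classifiers `f₂` and `f₃` have identical sets of `ε`-robust
points, hence the same standard adversarial accuracy by maximum perturbation norm. -/
theorem stmt_16 (ε : ℝ) (hε : 0 ≤ ε) :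
    {x ∈ Xtoy | ∀ x' : ℝ, |x' - x| ≤ ε → f₂ x' = ctoy x} =
    {x ∈ Xtoy | ∀ x' : ℝ, |x' - x| ≤ ε → f₃ x' = ctoy x} := by
  ext x
  refine and_congr_right fun hx => ?_
  obtain ⟨w, hw, hne, hnear⟩ := exists_near_misclassified hx
  constructor
  · intro h y hy
    rcases lt_or_ge y (-4) with hy4 | hy4
    · exact absurd ((f₂_eq_f₃ hw).symm.trans (h w ((hnear y hy4).trans hy))) hne
    · rw [← f₂_eq_f₃ hy4, h y hy]
  · intro h y hy
    rcases lt_or_ge y (-4) with hy4 | hy4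
    · exact absurd (h w ((hnear y hy4).trans hy)) hne
    · rw [f₂_eq_f₃ hy4, h y hy]
end
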